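/- (Theorem 2, limit) For every integer m ≥ 0, every integer n with 0 < n, and every real I with 0 ≤ I ≤ 1, as L → ∞ the probability P_L(m,n) converges, and lim_{L→∞} P_L(m,n) = (I/(1−I))^{m+1} if 0 ≤ I < 1/2, while lim_{L→∞} P_L(m,n) = 1 if 1/2 ≤ I ≤ 1. In particular the limit equals the classical probability that a double-spending attack on an infinitely-long blockchain succeeds when the counterfeit branch is m blocks shorter than the authentic branch. -/

import Mathlib

/-!
Forgetting the line `n' = L`, the walk becomes the one-dimensional gambler's-ruin walk on
`k = m' + 1`, and within `N` steps it cannot notice `L` once `L ≥ n + N`. So `P I L m n` is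
squeezed, for large `L`, between the probability `ruin I N k` of being ruined in fewer than `N`
steps and any `h k` for which `h` is a nonnegative harmonic function with `h 0 = 1`;
this is `PartialP_eq_ruin`, `PartialP_le_ruin` and `ruin_le`.

It remains to see `ruin I N k → h k` for `h k = r ^ k`, where `r = I / (1 - I)` if `I < 1/2` and
`r = 1` otherwise. The gap `f = h - lim ruin` is harmonic, vanishes at `0`, and `0 ≤ f ≤ h`. Its
increments satisfy `(1 - I) (f (k+2) - f (k+1)) = I (f (k+1) - f k)`, which for `I = 1` gives
`f = 0` at once and otherwise keeps them nonnegative. If `I < 1/2`, then `f` is monotone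
and dominated by `h → 0`, so `f = 0`. If `1/2 ≤ I < 1`, the increments
do not decrease, so `f k ≥ k f 1`, and boundedness forces `f 1 = 0`, hence `f = 0`.
-/

-- `P I L m n` : the probability that the 2D random walk started at `(m, n)`, with i.i.d.
-- steps `(-1, 0)` (probability `I`) and `(1, 1)` (probability `1 - I`), hits the line
-- `L₁ = {(m', n') : m' = -1}` strictly before hitting the line `L₂ = {(m', n') : n' = L}`,
-- written as `∑_{T=0}^∞ Pr(s_T ∈ L₁ ∧ ∀ T' < T, s_{T'} ∉ L₁ ∪ L₂)`.
-- A step sequence of length `T` is encoded as `d : Fin T → Bool`, where `d t = true` means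
-- the step `(1, 1)` (probability `1 - I`) and `d t = false` means `(-1, 0)` (probability `I`).
open Classical in
noncomputable def P (I : ℝ) (L m n : ℤ) : ℝ :=
  ∑' T : ℕ, ∑ d : Fin T → Bool,
    if (m + ∑ t : Fin T, (if d t then (1 : ℤ) else -1)) = -1 ∧
        (∀ k : ℕ, k < T →
          (m + ∑ t ∈ Finset.univ.filter (fun t : Fin T => (t : ℕ) < k),
              (if d t then (1 : ℤ) else -1)) ≠ -1 ∧
          (n + ∑ t ∈ Finset.univ.filter (fun t : Fin T => (t : ℕ) < k),
              (if d t then (1 : ℤ) else 0)) ≠ L) then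
      ∏ t : Fin T, (if d t then (1 - I) else I)
    else 0

open Filter Topology

/-! ### First-step analysis -/

open Classical in
/-- The `T`-th term of the series defining `P`: the probability that the walk first meets
`m' = -1` at time exactly `T`, without having met `n' = L` earlier. -/
noncomputable def hitAt (I : ℝ) (L : ℤ) (T : ℕ) (m n : ℤ) : ℝ :=
  ∑ d : Fin T → Bool,
    if (m + ∑ t : Fin T, (if d t then (1 : ℤ) else -1)) = -1 ∧
        (∀ k : ℕ, k < T →
          (m + ∑ t ∈ Finset.univ.filter (fun t : Fin T => (t : ℕ) < k),
              (if d t then (1 : ℤ) else -1)) ≠ -1 ∧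
          (n + ∑ t ∈ Finset.univ.filter (fun t : Fin T => (t : ℕ) < k),
              (if d t then (1 : ℤ) else 0)) ≠ L) then
      ∏ t : Fin T, (if d t then (1 - I) else I)
    else 0

theorem P_eq_tsum (I : ℝ) (L m n : ℤ) : P I L m n = ∑' T, hitAt I L T m n := rfl

theorem hitAt_zero (I : ℝ) (L m n : ℤ) :
    hitAt I L 0 m n = if m = -1 then 1 else 0 := by
  simp [hitAt]

theorem hitAt_nonneg {I : ℝ} (hI0 : 0 ≤ I) (hI1 : I ≤ 1) (L : ℤ) (T : ℕ) (m n : ℤ) :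
    0 ≤ hitAt I L T m n := by
  unfold hitAt
  refine Finset.sum_nonneg fun d _ => ?_
  split_ifs
  · refine Finset.prod_nonneg fun t _ => ?_
    split_ifs <;> linarith
  · exact le_rfl

theorem sum_filter_cons (T k : ℕ) (b : Bool) (d : Fin T → Bool) (x y : ℤ) :
    ∑ t ∈ Finset.univ.filter (fun t : Fin (T + 1) => (t : ℕ) < k + 1),
        (if (Fin.cons b d : Fin (T + 1) → Bool) t then x else y) =
      (if b then x else y) +
        ∑ t ∈ Finset.univ.filter (fun t : Fin T => (t : ℕ) < k), (if d t then x else y) := by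
  rw [Finset.sum_filter, Finset.sum_filter, Fin.sum_univ_succ]
  simp

theorem hitAt_succ (I : ℝ) (L : ℤ) (T : ℕ) (m n : ℤ) :
    hitAt I L (T + 1) m n =
      if m ≠ -1 ∧ n ≠ L then
        I * hitAt I L T (m - 1) n + (1 - I) * hitAt I L T (m + 1) (n + 1)
      else 0 := by
  classical
  unfold hitAt
  rw [← (Fin.consEquiv (fun _ : Fin (T + 1) => Bool)).sum_comp, Fintype.sum_prod_type,
    Fintype.sum_bool]
  simp only [Fin.consEquiv_apply, Nat.forall_lt_succ_left, sum_filter_cons, Fin.sum_univ_succ,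
    Fin.prod_univ_succ, Fin.cons_zero, Fin.cons_succ]
  by_cases h : m ≠ -1 ∧ n ≠ L
  · rw [if_pos h, Finset.mul_sum, Finset.mul_sum, add_comm]
    congr 1
    · refine Finset.sum_congr rfl fun d _ => ?_
      simp [h.1, h.2, ← add_assoc, sub_eq_add_neg]
    · refine Finset.sum_congr rfl fun d _ => ?_
      simp [h.1, h.2, ← add_assoc]
  · rw [if_neg h]
    rw [Finset.sum_eq_zero, Finset.sum_eq_zero, add_zero]
    all_goals
      intro d _
      refine if_neg fun hc => h ?_
      simpa using hc.2.1

/-- The probability of meeting `m' = -1` before `n' = L` and in fewer than `N` steps. -/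
noncomputable def PartialP (I : ℝ) (L : ℤ) (N : ℕ) (m n : ℤ) : ℝ :=
  ∑ T ∈ Finset.range N, hitAt I L T m n

theorem PartialP_succ_neg_one (I : ℝ) (L : ℤ) (N : ℕ) (n : ℤ) :
    PartialP I L (N + 1) (-1) n = 1 := by
  simp [PartialP, Finset.sum_range_succ', hitAt_zero, hitAt_succ]

theorem PartialP_succ (I : ℝ) (L : ℤ) (N : ℕ) (m n : ℤ) (hm : m ≠ -1) :
    PartialP I L (N + 1) m n =
      if n ≠ L then
        I * PartialP I L N (m - 1) n + (1 - I) * PartialP I L N (m + 1) (n + 1)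
      else 0 := by
  simp only [PartialP, Finset.sum_range_succ', hitAt_zero, hitAt_succ, hm, if_false, add_zero]
  by_cases h : n = L
  · simp [h]
  · simp [h, hm, Finset.sum_add_distrib, Finset.mul_sum]

/-! ### The one-dimensional walk -/

/-- The probability that the one-dimensional walk started at `k`, stepping `-1` with probability
`I` and `+1` with probability `1 - I`, reaches `0` in fewer than `N` steps. The position `k`
stands for `m' + 1` in the two-dimensional walk. -/
noncomputable def ruin (I : ℝ) : ℕ → ℕ → ℝ
  | 0, _ => 0
  | _ + 1, 0 => 1
  | N + 1, k + 1 => I * ruin I N k + (1 - I) * ruin I N (k + 2)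

theorem ruin_nonneg {I : ℝ} (hI0 : 0 ≤ I) (hI1 : I ≤ 1) (N k : ℕ) : 0 ≤ ruin I N k := by
  induction N generalizing k with
  | zero => simp [ruin]
  | succ N ih =>
    cases k with
    | zero => simp [ruin]
    | succ k =>
      have := mul_nonneg hI0 (ih k)
      have := mul_nonneg (sub_nonneg.2 hI1) (ih (k + 2))
      simp only [ruin]
      linarith

theorem ruin_le_succ {I : ℝ} (hI0 : 0 ≤ I) (hI1 : I ≤ 1) (N k : ℕ) :
    ruin I N k ≤ ruin I (N + 1) k := by
  induction N generalizing k with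
  | zero => simpa [ruin] using ruin_nonneg hI0 hI1 1 k
  | succ N ih =>
    cases k with
    | zero => simp [ruin]
    | succ k =>
      have h1 := mul_le_mul_of_nonneg_left (ih k) hI0
      have h2 := mul_le_mul_of_nonneg_left (ih (k + 2)) (sub_nonneg.2 hI1)
      rw [ruin, ruin]
      exact add_le_add h1 h2

/-- Every nonnegative harmonic function with value `1` at `0` dominates the ruin probabilities. -/
theorem ruin_le {I : ℝ} (hI0 : 0 ≤ I) (hI1 : I ≤ 1) {h : ℕ → ℝ} (h_nonneg : ∀ k, 0 ≤ h k)
    (h_zero : h 0 = 1) (h_harm : ∀ k, h (k + 1) = I * h k + (1 - I) * h (k + 2)) (N k : ℕ) :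
    ruin I N k ≤ h k := by
  induction N generalizing k with
  | zero => simpa [ruin] using h_nonneg k
  | succ N ih =>
    cases k with
    | zero => simp [ruin, h_zero]
    | succ k =>
      have h1 := mul_le_mul_of_nonneg_left (ih k) hI0
      have h2 := mul_le_mul_of_nonneg_left (ih (k + 2)) (sub_nonneg.2 hI1)
      rw [h_harm, ruin]
      exact add_le_add h1 h2

theorem PartialP_le_ruin {I : ℝ} (hI0 : 0 ≤ I) (hI1 : I ≤ 1) (L : ℤ) (N k : ℕ) (n : ℤ) :
    PartialP I L N ((k : ℤ) - 1) n ≤ ruin I N k := by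
  induction N generalizing k n with
  | zero => simp [PartialP, ruin]
  | succ N ih =>
    cases k with
    | zero => simpa [ruin] using (PartialP_succ_neg_one I L N n).le
    | succ k =>
      rw [PartialP_succ _ _ _ _ _ (by push_cast; omega)]
      split_ifs
      · have h1 := mul_le_mul_of_nonneg_left (ih k n) hI0
        have h2 := mul_le_mul_of_nonneg_left (ih (k + 2) (n + 1)) (sub_nonneg.2 hI1)
        have e1 : ((k + 1 : ℕ) : ℤ) - 1 - 1 = (k : ℤ) - 1 := by omega
        have e2 : ((k + 1 : ℕ) : ℤ) - 1 + 1 = ((k + 2 : ℕ) : ℤ) - 1 := by omega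
        rw [ruin, e1, e2]
        exact add_le_add h1 h2
      · exact ruin_nonneg hI0 hI1 _ _

theorem PartialP_eq_ruin (I : ℝ) (L : ℤ) (N k : ℕ) (n : ℤ) (hL : n + N ≤ L) :
    PartialP I L N ((k : ℤ) - 1) n = ruin I N k := by
  induction N generalizing k n with
  | zero => simp [PartialP, ruin]
  | succ N ih =>
    push_cast at hL
    cases k with
    | zero => simpa [ruin] using PartialP_succ_neg_one I L N n
    | succ k =>
      rw [PartialP_succ _ _ _ _ _ (by push_cast; omega), if_pos (by omega), ruin,
        ← ih k n (by omega), ← ih (k + 2) (n + 1) (by omega)]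
      congr 3 <;> push_cast <;> ring

/-! ### Passing to the limit -/

/-- Convergence of the ruin probabilities transfers to `P`. -/
theorem tendsto_P {I : ℝ} (hI0 : 0 ≤ I) (hI1 : I ≤ 1) (k : ℕ) (n : ℤ) {c : ℝ}
    (h_le : ∀ N, ruin I N k ≤ c) (h_lim : Tendsto (fun N => ruin I N k) atTop (𝓝 c)) :
    Tendsto (fun L : ℕ => P I (L : ℤ) ((k : ℤ) - 1) n) atTop (𝓝 c) := by
  have bound : ∀ (L : ℤ) (N : ℕ),
      ∑ T ∈ Finset.range N, hitAt I L T ((k : ℤ) - 1) n ≤ c := fun L N =>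
    (PartialP_le_ruin hI0 hI1 L N k n).trans (h_le N)
  have summ : ∀ L : ℤ, Summable fun T => hitAt I L T ((k : ℤ) - 1) n := fun L =>
    summable_of_sum_range_le (fun T => hitAt_nonneg hI0 hI1 L T _ n) (bound L)
  refine tendsto_order.2 ⟨fun a ha => ?_, fun a ha => ?_⟩
  · obtain ⟨N, hN⟩ := ((tendsto_order.1 h_lim).1 a ha).exists
    filter_upwards [eventually_ge_atTop (n + N).toNat] with L hL
    have h1 := PartialP_eq_ruin I (L : ℤ) N k n (by omega)
    have h2 : PartialP I L N ((k : ℤ) - 1) n ≤ P I L ((k : ℤ) - 1) n :=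
      (summ L).sum_le_tsum _ fun T _ => hitAt_nonneg hI0 hI1 L T _ n
    linarith
  · refine Eventually.of_forall fun L => lt_of_le_of_lt ?_ ha
    exact Real.tsum_le_of_sum_range_le (fun T => hitAt_nonneg hI0 hI1 L T _ n) (bound L)

/-- If no nonzero harmonic function vanishing at `0` lies between `0` and `h`, then `h` is the
limit of the ruin probabilities, hence of `P`. -/
theorem tendsto_P_of_unique {I : ℝ} (hI0 : 0 ≤ I) (hI1 : I ≤ 1) {h : ℕ → ℝ}
    (h_nonneg : ∀ k, 0 ≤ h k) (h_zero : h 0 = 1)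
    (h_harm : ∀ k, h (k + 1) = I * h k + (1 - I) * h (k + 2))
    (uniq : ∀ f : ℕ → ℝ, f 0 = 0 → (∀ k, 0 ≤ f k) → (∀ k, f k ≤ h k) →
      (∀ k, (1 - I) * (f (k + 2) - f (k + 1)) = I * (f (k + 1) - f k)) → ∀ k, f k = 0)
    (k : ℕ) (n : ℤ) :
    Tendsto (fun L : ℕ => P I (L : ℤ) ((k : ℤ) - 1) n) atTop (𝓝 (h k)) := by
  have le := ruin_le hI0 hI1 h_nonneg h_zero h_harm
  have lim : ∀ k, ∃ q, Tendsto (fun N => ruin I N k) atTop (𝓝 q) := fun k =>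
    ⟨_, tendsto_atTop_ciSup (monotone_nat_of_le_succ fun N => ruin_le_succ hI0 hI1 N k)
      ⟨h k, by rintro _ ⟨N, rfl⟩; exact le N k⟩⟩
  choose q hq using lim
  have q_zero : q 0 = 1 := by
    refine tendsto_nhds_unique ((tendsto_add_atTop_iff_nat 1).2 (hq 0)) ?_
    simp [ruin]
  have q_harm : ∀ k, q (k + 1) = I * q k + (1 - I) * q (k + 2) := fun k => by
    refine tendsto_nhds_unique ((tendsto_add_atTop_iff_nat 1).2 (hq (k + 1))) ?_
    simpa only [ruin] using ((hq k).const_mul I).add ((hq (k + 2)).const_mul (1 - I))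
  have q_nonneg : ∀ k, 0 ≤ q k := fun k => ge_of_tendsto' (hq k) fun N => ruin_nonneg hI0 hI1 N k
  have q_le : ∀ k, q k ≤ h k := fun k => le_of_tendsto' (hq k) fun N => le N k
  have key := uniq (fun k => h k - q k) (by simp [h_zero, q_zero])
    (fun k => sub_nonneg.2 (q_le k)) (fun k => by linarith [q_nonneg k])
    (fun k => by linear_combination q_harm k - h_harm k) k
  have hk : h k = q k := sub_eq_zero.1 key
  exact tendsto_P hI0 hI1 k n (fun N => le N k) (hk ▸ hq k)

/-- Below `1/2` a harmonic `f ≥ 0` with `f 0 = 0` is monotone, so it vanishes as soon as it is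
dominated by a function tending to `0`. -/
theorem uniq_of_lt {I : ℝ} (hI0 : 0 ≤ I) (hI : I < 1 / 2) {h : ℕ → ℝ}
    (h_lim : Tendsto h atTop (𝓝 0)) (f : ℕ → ℝ) (f0 : f 0 = 0) (f_nonneg : ∀ k, 0 ≤ f k)
    (f_le : ∀ k, f k ≤ h k)
    (f_harm : ∀ k, (1 - I) * (f (k + 2) - f (k + 1)) = I * (f (k + 1) - f k)) (k : ℕ) :
    f k = 0 := by
  have inc : ∀ k, 0 ≤ f (k + 1) - f k := by
    intro k
    induction k with
    | zero => simpa [f0] using f_nonneg 1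
    | succ k ih =>
      refine nonneg_of_mul_nonneg_right (a := 1 - I) ?_ (by linarith)
      rw [f_harm]
      exact mul_nonneg hI0 ih
  have mono : Monotone f := monotone_nat_of_le_succ fun k => sub_nonneg.1 (inc k)
  refine le_antisymm (ge_of_tendsto h_lim ?_) (f_nonneg k)
  filter_upwards [eventually_ge_atTop k] with j hj
  exact (mono hj).trans (f_le j)

/-- From `1/2` on, the increments of a harmonic `f ≥ 0` with `f 0 = 0` do not decrease, so `f`
grows at least linearly unless it vanishes. The case `I = 1` is separate, as the recursion
then cannot be divided by `1 - I`. -/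
theorem uniq_of_ge {I : ℝ} (hI : 1 / 2 ≤ I) (hI1 : I ≤ 1) (f : ℕ → ℝ) (f0 : f 0 = 0)
    (f_nonneg : ∀ k, 0 ≤ f k) (f_le : ∀ k, f k ≤ 1)
    (f_harm : ∀ k, (1 - I) * (f (k + 2) - f (k + 1)) = I * (f (k + 1) - f k)) (k : ℕ) :
    f k = 0 := by
  have f1 : f 1 = 0 := by
    rcases hI1.eq_or_lt with rfl | hlt
    · simpa [f0] using (f_harm 0).symm
    have inc : ∀ k, f 1 ≤ f (k + 1) - f k := by
      intro k
      induction k with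
      | zero => simp [f0]
      | succ k ih =>
        refine ih.trans (le_of_mul_le_mul_left (a := 1 - I) ?_ (by linarith))
        rw [f_harm]
        exact mul_le_mul_of_nonneg_right (by linarith) ((f_nonneg 1).trans ih)
    have lin : ∀ k : ℕ, k * f 1 ≤ f k := by
      intro k
      induction k with
      | zero => simp [f0]
      | succ k ih => push_cast; linarith [inc k]
    by_contra hne
    have pos : 0 < f 1 := lt_of_le_of_ne (f_nonneg 1) (Ne.symm hne)
    obtain ⟨j, hj⟩ := exists_nat_gt (1 / f 1)
    rw [div_lt_iff₀ pos] at hj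
    linarith [lin j, f_le j]
  rcases hI1.eq_or_lt with rfl | hlt
  · cases k with
    | zero => exact f0
    | succ k =>
      induction k with
      | zero => exact f1
      | succ k ih => linarith [f_harm (k + 1), ih]
  have zero : ∀ k, f k = 0 ∧ f (k + 1) = 0 := by
    intro k
    induction k with
    | zero => exact ⟨f0, f1⟩
    | succ k ih =>
      refine ⟨ih.2, ?_⟩
      have := f_harm k
      rw [ih.1, ih.2, sub_zero, sub_zero, mul_zero] at this
      exact (mul_eq_zero.1 this).resolve_left (by linarith)
  exact (zero k).1

-- STATEMENT 13 (Theorem 2, limit): for every integer `m ≥ 0`, every integer `n > 0`, and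
-- every real `I` with `0 ≤ I ≤ 1`, as `L → ∞` the probability `P_L(m, n)` converges, with
-- limit `(I/(1-I))^(m+1)` if `0 ≤ I < 1/2` and limit `1` if `1/2 ≤ I ≤ 1` (the classical
-- success probability of a double-spending attack on an infinitely-long blockchain when the
-- counterfeit branch is `m` blocks shorter than the authentic branch).
theorem stmt13 (I : ℝ) (hI0 : 0 ≤ I) (hI1 : I ≤ 1) (m : ℤ) (hm : 0 ≤ m)
    (n : ℤ) (hn : 0 < n) :
    (I < 1 / 2 →
        Filter.Tendsto (fun L : ℕ => P I (L : ℤ) m n) Filter.atTop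
          (nhds ((I / (1 - I)) ^ (m + 1).toNat))) ∧
      (1 / 2 ≤ I →
        Filter.Tendsto (fun L : ℕ => P I (L : ℤ) m n) Filter.atTop (nhds 1)) := by
  obtain ⟨k, rfl⟩ : ∃ k : ℕ, m = (k : ℤ) - 1 := ⟨(m + 1).toNat, by omega⟩
  have hk : ((k : ℤ) - 1 + 1).toNat = k := by omega
  refine ⟨fun hI => ?_, fun hI => ?_⟩
  · rw [hk]
    have pos : 0 < 1 - I := by linarith
    have r_nonneg : 0 ≤ I / (1 - I) := div_nonneg hI0 pos.le
    have r_lt : I / (1 - I) < 1 := (div_lt_one pos).2 (by linarith)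
    refine tendsto_P_of_unique (h := fun k => (I / (1 - I)) ^ k) hI0 hI1
      (fun k => pow_nonneg r_nonneg k) (pow_zero _) (fun j => ?_)
      (uniq_of_lt hI0 hI (tendsto_pow_atTop_nhds_zero_of_lt_one r_nonneg r_lt)) k n
    -- `r = I / (1 - I)` is a root of `(1 - I) r² - r + I = 0`.
    have root : (1 - I) * (I / (1 - I)) = I := mul_div_cancel₀ I pos.ne'
    simp only [pow_succ]
    linear_combination (1 - I / (1 - I)) * (I / (1 - I)) ^ j * root
  · exact tendsto_P_of_unique (h := fun _ => 1) hI0 hI1 (fun _ => zero_le_one) rfl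
      (fun _ => by ring) (uniq_of_ge hI hI1) k n
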